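/- arXiv:2507.12583 — 7 statements merged into one kernel-verified Lean document; each statement's English description precedes it below -/
import Mathlib

section
/- Let x_1, …, x_n ∈ X_m be ranking vectors and for each coordinate j let x̄_j = (1/n) Σ_{i=1}^n x_{ij} be the j-th coordinate mean. If y* ∈ X_m is any ranking vector such that for all coordinates j, j', x̄_j < x̄_{j'} implies y*_j < y*_{j'} (i.e., y* ranks the coordinates in nondecreasing order of the means, with ties among equal means broken arbitrarily), then y* is an optimal centroid: for every ranking vector y ∈ X_m, Σ_{i=1}^n ‖x_i − y*‖² ≤ Σ_{i=1}^n ‖x_i − y‖². -/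
/-- A ranking vector of dimension `m`: its entries are a permutation of `1, 2, …, m`. -/
def IsRankingVector {m : ℕ} (x : Fin m → ℝ) : Prop :=
  ∃ σ : Equiv.Perm (Fin m), ∀ i, x i = ((σ i : ℕ) : ℝ) + 1

/-- If a ranking vector `y*` orders the coordinates in nondecreasing order of the
coordinate means of the observations, then it is an optimal centroid. -/
theorem stmt1 (n m : ℕ) (x : Fin n → Fin m → ℝ) (hx : ∀ i, IsRankingVector (x i))
    (xbar : Fin m → ℝ) (hxbar : ∀ j, xbar j = (∑ i, x i j) / n)
    (ystar : Fin m → ℝ) (hystar : IsRankingVector ystar)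
    (hrank : ∀ j j', xbar j < xbar j' → ystar j < ystar j')
    (y : Fin m → ℝ) (hy : IsRankingVector y) :
    ∑ i, ∑ j, (x i j - ystar j) ^ 2 ≤ ∑ i, ∑ j, (x i j - y j) ^ 2 := by
  obtain ⟨σ, hσ⟩ := hystar
  obtain ⟨τ, hτ⟩ := hy
  have hyy : ∀ j, y j = ystar ((τ.trans σ.symm) j) := by
    intro j
    rw [hτ, hσ]
    simp
  have hmono : Monovary ystar xbar := fun j j' h => (hrank j j' h).le
  have h1 : ∑ j, y j * xbar j ≤ ∑ j, ystar j * xbar j := by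
    simp only [hyy]
    exact hmono.sum_comp_perm_mul_le_sum_mul
  have h2 : ∑ j, y j ^ 2 = ∑ j, ystar j ^ 2 := by
    simp only [hyy]
    exact Equiv.sum_comp (τ.trans σ.symm) (fun j => ystar j ^ 2)
  have hs : ∀ j, ∑ i, x i j = n * xbar j := by
    intro j
    rw [hxbar]
    rcases Nat.eq_zero_or_pos n with h | h
    · subst h
      simp
    · have : (n : ℝ) ≠ 0 := by positivity
      field_simp
  have key : ∀ z : Fin m → ℝ, ∑ i, ∑ j, (x i j - z j) ^ 2
      = (∑ j, ∑ i, x i j ^ 2) - 2 * n * (∑ j, z j * xbar j) + n * ∑ j, z j ^ 2 := by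
    intro z
    rw [Finset.sum_comm, Finset.mul_sum, Finset.mul_sum, ← Finset.sum_sub_distrib,
      ← Finset.sum_add_distrib]
    refine Finset.sum_congr rfl fun j _ => ?_
    have : ∀ i, (x i j - z j) ^ 2 = x i j ^ 2 - 2 * z j * x i j + z j ^ 2 := fun i => by ring
    simp only [this, Finset.sum_add_distrib, Finset.sum_sub_distrib, ← Finset.mul_sum, hs]
    simp
    ring
  rw [key, key, h2]
  have hn : (0 : ℝ) ≤ 2 * n := by positivity
  have := mul_le_mul_of_nonneg_left h1 hn
  linarith
end

section
/- Let S_1, …, S_k be a partition of a finite family of ranking vectors from X_m into nonempty clusters, let ȳ_ℓ denote the mean of the vectors in cluster S_ℓ, and for each ℓ let the KRC cost of S_ℓ be min_{y ∈ X_m} Σ_{x ∈ S_ℓ} ‖x − y‖². Then the total KRC cost is at most twice the total KMC cost: Σ_{ℓ=1}^k min_{y ∈ X_m} Σ_{x ∈ S_ℓ} ‖x − y‖² ≤ 2 Σ_{ℓ=1}^k Σ_{x ∈ S_ℓ} ‖x − ȳ_ℓ‖². -/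
/-- The KRC cost of a cluster: the minimal sum of squared Euclidean distances to a
ranking-vector centroid. -/
noncomputable def clusterKRC {n m : ℕ} (S : Finset (Fin n)) (p : Fin n → Fin m → ℝ) : ℝ :=
  sInf {v : ℝ | ∃ y : Fin m → ℝ, IsRankingVector y ∧ v = ∑ i ∈ S, ∑ j, (p i j - y j) ^ 2}

lemma aux_id {n : ℕ} (S : Finset (Fin n)) (x : Fin n → ℝ) (y : ℝ) (h : S.card * y = ∑ i ∈ S, x i) :
    ∑ a ∈ S, ∑ i ∈ S, (x i - x a) ^ 2 = S.card * (2 * ∑ i ∈ S, (x i - y) ^ 2) := by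
  have e1 : ∀ b : ℝ, ∑ i ∈ S, (x i - b) ^ 2
      = ∑ i ∈ S, x i ^ 2 - 2 * b * ∑ i ∈ S, x i + S.card * b ^ 2 := by
    intro b
    rw [Finset.mul_sum, ← Finset.sum_sub_distrib, ← nsmul_eq_mul, ← Finset.sum_const,
      ← Finset.sum_add_distrib]
    exact Finset.sum_congr rfl fun i _ => by ring
  simp only [e1]
  rw [Finset.sum_add_distrib, Finset.sum_sub_distrib, ← Finset.sum_mul, ← Finset.mul_sum,
    ← Finset.mul_sum, Finset.sum_const, nsmul_eq_mul, ← h]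
  ring

lemma aux_cluster {n m : ℕ} (S : Finset (Fin n)) (hS : S.Nonempty) (p : Fin n → Fin m → ℝ)
    (hp : ∀ i, IsRankingVector (p i)) (y : Fin m → ℝ)
    (hy : ∀ j, y j = (∑ i ∈ S, p i j) / (S.card : ℝ)) :
    clusterKRC S p ≤ 2 * ∑ i ∈ S, ∑ j, (p i j - y j) ^ 2 := by
  have hN : (0 : ℝ) < S.card := by exact_mod_cast hS.card_pos
  have h1 : ∀ a ∈ S, clusterKRC S p ≤ ∑ i ∈ S, ∑ j, (p i j - p a j) ^ 2 := by
    intro a _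
    refine csInf_le ⟨0, ?_⟩ ⟨p a, hp a, rfl⟩
    rintro v ⟨z, _, rfl⟩
    positivity
  have h2 := Finset.sum_le_sum h1
  rw [Finset.sum_const, nsmul_eq_mul] at h2
  refine le_of_mul_le_mul_left (h2.trans_eq ?_) hN
  have h3 : ∀ a ∈ S, ∑ i ∈ S, ∑ j, (p i j - p a j) ^ 2 = ∑ j, ∑ i ∈ S, (p i j - p a j) ^ 2 :=
    fun a _ => Finset.sum_comm
  rw [Finset.sum_congr rfl h3, Finset.sum_comm, Finset.sum_comm (s := S), Finset.mul_sum,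
    Finset.mul_sum]
  refine Finset.sum_congr rfl fun j _ => aux_id S (fun i => p i j) (y j) ?_
  rw [hy]
  field_simp

/-- For any partition of ranking vectors into nonempty clusters, the total KRC cost
is at most twice the total KMC cost. -/
theorem stmt3 (n m k : ℕ) (p : Fin n → Fin m → ℝ) (hp : ∀ i, IsRankingVector (p i))
    (c : Fin n → Fin k) (hne : ∀ ℓ, ∃ i, c i = ℓ)
    (ybar : Fin k → Fin m → ℝ)
    (hybar : ∀ ℓ j, ybar ℓ j =
      (∑ i ∈ Finset.univ.filter (fun i => c i = ℓ), p i j) /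
        ((Finset.univ.filter (fun i => c i = ℓ)).card : ℝ)) :
    ∑ ℓ, clusterKRC (Finset.univ.filter (fun i => c i = ℓ)) p ≤
      2 * ∑ ℓ, ∑ i ∈ Finset.univ.filter (fun i => c i = ℓ), ∑ j, (p i j - ybar ℓ j) ^ 2 := by
  rw [Finset.mul_sum]
  refine Finset.sum_le_sum fun ℓ _ => aux_cluster _ ?_ p hp _ (hybar ℓ)
  obtain ⟨i, hi⟩ := hne ℓ
  exact ⟨i, by simp [hi]⟩
end

section
/- Let S be a nonempty finite family of ranking vectors from X_m with mean ȳ = (1/|S|) Σ_{x ∈ S} x, and let y* ∈ X_m be a ranking vector maximizing the inner product with the mean, i.e., ⟨ȳ, y*⟩ ≥ ⟨ȳ, c⟩ for every c ∈ X_m. Then |S| · ‖ȳ − y*‖² ≤ Σ_{x ∈ S} ‖x − ȳ‖²; that is, the squared distance from the mean to this optimal ranking-vector centroid, summed over the cluster, is at most the within-cluster sum of squared deviations from the mean. -/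
theorem sq_sum_ranking {m : ℕ} (x : Fin m → ℝ) (hx : IsRankingVector x) :
    ∑ j, x j ^ 2 = ∑ j : Fin m, (((j : ℕ) : ℝ) + 1) ^ 2 := by
  obtain ⟨σ, hσ⟩ := hx
  simp only [hσ]
  exact Equiv.sum_comp σ (fun j : Fin m => (((j : ℕ) : ℝ) + 1) ^ 2)

/-- If `y*` is a ranking vector maximizing the inner product with the cluster mean `ȳ`,
then `|S| ⬝ ‖ȳ − y*‖²` is at most the within-cluster sum of squared deviations. -/
theorem stmt4 (n m : ℕ) (hn : 0 < n)
    (p : Fin n → Fin m → ℝ) (hp : ∀ i, IsRankingVector (p i))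
    (ybar : Fin m → ℝ) (hybar : ∀ j, ybar j = (∑ i, p i j) / n)
    (ystar : Fin m → ℝ) (hstar : IsRankingVector ystar)
    (hmax : ∀ c : Fin m → ℝ, IsRankingVector c →
      ∑ j, ybar j * c j ≤ ∑ j, ybar j * ystar j) :
    (n : ℝ) * ∑ j, (ybar j - ystar j) ^ 2 ≤ ∑ i, ∑ j, (p i j - ybar j) ^ 2 := by
  have key : ∀ i, ∑ j, (ybar j - ystar j) ^ 2 ≤ ∑ j, (p i j - ybar j) ^ 2 := by
    intro i
    have h1 := hmax (p i) (hp i)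
    have h2 := (sq_sum_ranking _ (hp i)).trans (sq_sum_ranking _ hstar).symm
    have e : ∀ a b : Fin m → ℝ, ∑ j, (a j - b j) ^ 2
        = ∑ j, a j ^ 2 - 2 * ∑ j, a j * b j + ∑ j, b j ^ 2 := by
      intro a b
      rw [Finset.mul_sum, ← Finset.sum_sub_distrib, ← Finset.sum_add_distrib]
      exact Finset.sum_congr rfl fun j _ => by ring
    have h3 : ∑ j, p i j * ybar j = ∑ j, ybar j * p i j :=
      Finset.sum_congr rfl fun j _ => mul_comm _ _
    rw [e, e, h3]
    linarith
  calc (n : ℝ) * ∑ j, (ybar j - ystar j) ^ 2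
      = ∑ _i : Fin n, ∑ j, (ybar j - ystar j) ^ 2 := by simp
    _ ≤ _ := Finset.sum_le_sum fun i _ => key i
end

section
/- Let S = {x_1, …, x_n} be a finite family of ranking vectors from X_m and let k ≥ 1. Let v_KMC* be the minimum of v_KMC(S_1, …, S_k) over all partitions of S into at most k nonempty clusters, and let v_KRC* be the minimum of v_KRC(S_1, …, S_k) over the same partitions. Then v_KMC* ≤ v_KRC* ≤ 2 v_KMC*. -/
/-- The KMC objective of a partition (given by the assignment `c`), with optimally
chosen (mean) centroids. -/
noncomputable def vKMC {n m k : ℕ} (p : Fin n → Fin m → ℝ) (c : Fin n → Fin k) : ℝ :=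
  ∑ ℓ, ∑ i ∈ Finset.univ.filter (fun i => c i = ℓ), ∑ j,
    (p i j - (∑ i' ∈ Finset.univ.filter (fun i' => c i' = ℓ), p i' j) /
      ((Finset.univ.filter (fun i' => c i' = ℓ)).card : ℝ)) ^ 2

/-- The KRC objective of a partition (given by the assignment `c`), with optimally
chosen ranking-vector centroids. -/
noncomputable def vKRC {n m k : ℕ} (p : Fin n → Fin m → ℝ) (c : Fin n → Fin k) : ℝ :=
  ∑ ℓ, sInf {v : ℝ | ∃ y : Fin m → ℝ, IsRankingVector y ∧
    v = ∑ i ∈ Finset.univ.filter (fun i => c i = ℓ), ∑ j, (p i j - y j) ^ 2}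

theorem mean_decomp {n m : ℕ} (p : Fin n → Fin m → ℝ) (s : Finset (Fin n)) (y : Fin m → ℝ) :
    ∑ i ∈ s, ∑ j, (p i j - y j) ^ 2 =
      ∑ i ∈ s, ∑ j, (p i j - (∑ i' ∈ s, p i' j) / (s.card : ℝ)) ^ 2 +
        (s.card : ℝ) * ∑ j, (y j - (∑ i' ∈ s, p i' j) / (s.card : ℝ)) ^ 2 := by
  rw [Finset.sum_comm, Finset.sum_comm (s := s) (t := Finset.univ), Finset.mul_sum,
    ← Finset.sum_add_distrib]
  refine Finset.sum_congr rfl fun j _ => ?_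
  rcases s.eq_empty_or_nonempty with rfl | hs
  · simp
  have hc : (s.card : ℝ) ≠ 0 := by
    exact_mod_cast hs.card_pos.ne'
  set μ := (∑ i' ∈ s, p i' j) / (s.card : ℝ) with hμ
  have h1 : ∑ i' ∈ s, p i' j = s.card * μ := by
    rw [hμ]; field_simp
  have h2 : ∀ i ∈ s, (p i j - y j) ^ 2 =
      (p i j - μ) ^ 2 + (2 * (μ - y j) * p i j + (y j ^ 2 - μ ^ 2)) := by
    intro i _; ring
  rw [Finset.sum_congr rfl h2, Finset.sum_add_distrib, Finset.sum_add_distrib, ← Finset.mul_sum,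
    h1, Finset.sum_const, nsmul_eq_mul]
  ring

theorem bdd_cost {n m : ℕ} (p : Fin n → Fin m → ℝ) (s : Finset (Fin n)) :
    BddBelow {v : ℝ | ∃ y : Fin m → ℝ, IsRankingVector y ∧
      v = ∑ i ∈ s, ∑ j, (p i j - y j) ^ 2} := by
  refine ⟨0, ?_⟩
  rintro v ⟨y, -, rfl⟩
  positivity

theorem cluster_lower {n m : ℕ} (p : Fin n → Fin m → ℝ) (s : Finset (Fin n)) :
    ∑ i ∈ s, ∑ j, (p i j - (∑ i' ∈ s, p i' j) / (s.card : ℝ)) ^ 2 ≤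
      sInf {v : ℝ | ∃ y : Fin m → ℝ, IsRankingVector y ∧
        v = ∑ i ∈ s, ∑ j, (p i j - y j) ^ 2} := by
  apply le_csInf
  · exact ⟨_, fun i => ((i : ℕ) : ℝ) + 1, ⟨Equiv.refl _, fun i => rfl⟩, rfl⟩
  · rintro v ⟨y, -, rfl⟩
    rw [mean_decomp p s y]
    have : 0 ≤ (s.card : ℝ) * ∑ j, (y j - (∑ i' ∈ s, p i' j) / (s.card : ℝ)) ^ 2 := by positivity
    linarith

theorem cluster_upper {n m : ℕ} (p : Fin n → Fin m → ℝ) (hp : ∀ i, IsRankingVector (p i))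
    (s : Finset (Fin n)) :
    sInf {v : ℝ | ∃ y : Fin m → ℝ, IsRankingVector y ∧
        v = ∑ i ∈ s, ∑ j, (p i j - y j) ^ 2} ≤
    2 * ∑ i ∈ s, ∑ j, (p i j - (∑ i' ∈ s, p i' j) / (s.card : ℝ)) ^ 2 := by
  rcases s.eq_empty_or_nonempty with rfl | hs
  · refine csInf_le (bdd_cost p ∅) ⟨fun i => ((i : ℕ) : ℝ) + 1, ⟨Equiv.refl _, fun i => rfl⟩, ?_⟩
    simp
  obtain ⟨i, hi, hmin⟩ := s.exists_min_image
    (fun i => ∑ j, (p i j - (∑ i' ∈ s, p i' j) / (s.card : ℝ)) ^ 2) hs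
  have h1 := Finset.card_nsmul_le_sum s _ _ hmin
  rw [nsmul_eq_mul] at h1
  refine (csInf_le (bdd_cost p s) ⟨p i, hp i, rfl⟩).trans ?_
  rw [mean_decomp p s (p i)]
  linarith

/-- `v_KMC* ≤ v_KRC* ≤ 2 v_KMC*`, where the stars denote minima over all partitions
of the ranking vectors into at most `k` nonempty clusters. -/
theorem stmt5 (n m k : ℕ) (hk : 1 ≤ k)
    (p : Fin n → Fin m → ℝ) (hp : ∀ i, IsRankingVector (p i)) :
    sInf (Set.range fun c : Fin n → Fin k => vKMC p c) ≤
        sInf (Set.range fun c : Fin n → Fin k => vKRC p c) ∧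
      sInf (Set.range fun c : Fin n → Fin k => vKRC p c) ≤
        2 * sInf (Set.range fun c : Fin n → Fin k => vKMC p c) := by
  haveI : Nonempty (Fin k) := ⟨⟨0, hk⟩⟩
  have b1 : BddBelow (Set.range fun c : Fin n → Fin k => vKMC p c) :=
    (Set.finite_range _).bddBelow
  have b2 : BddBelow (Set.range fun c : Fin n → Fin k => vKRC p c) :=
    (Set.finite_range _).bddBelow
  constructor
  · apply le_csInf (Set.range_nonempty _)
    rintro _ ⟨c, rfl⟩
    refine (csInf_le b1 ⟨c, rfl⟩).trans ?_
    exact Finset.sum_le_sum fun ℓ _ => cluster_lower p _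
  · obtain ⟨c, hc⟩ := (Set.range_nonempty fun c : Fin n → Fin k => vKMC p c).csInf_mem
      (Set.finite_range _)
    rw [← hc]
    refine (csInf_le b2 ⟨c, rfl⟩).trans ?_
    simp only [vKMC, vKRC]
    rw [Finset.mul_sum]
    exact Finset.sum_le_sum fun ℓ _ => cluster_upper p hp _
end

section
/- Let z, w ∈ {0,1}^η be binary vectors and let x, y ∈ ℝ^{2η} be their respective alternating pair transformations. Then the Hamming distance between z and w equals half the squared Euclidean distance between x and y: Σ_{j=1}^η |z_j − w_j| = (1/2) ‖x − y‖². -/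
/-- The alternating pair transformation of a binary vector `z ∈ {0,1}^η`:
(in 1-indexed terms) `x_{2j-1} = (2j-1) + z_j` and `x_{2j} = 2j - z_j`. -/
def altPair {η : ℕ} (z : Fin η → ℝ) : Fin (2 * η) → ℝ := fun i =>
  if i.val % 2 = 0 then ((i.val : ℝ) + 1) + z ⟨i.val / 2, by have := i.isLt; omega⟩
  else ((i.val : ℝ) + 1) - z ⟨i.val / 2, by have := i.isLt; omega⟩

/-- The Hamming distance between two binary vectors equals half the squared Euclidean
distance between their alternating pair transformations. -/
theorem stmt10 (η : ℕ) (z w : Fin η → ℝ)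
    (hz : ∀ j, z j = 0 ∨ z j = 1) (hw : ∀ j, w j = 0 ∨ w j = 1) :
    ∑ j, |z j - w j| = (1 / 2) * ∑ i, (altPair z i - altPair w i) ^ 2 := by
  have key : ∀ j, (z j - w j) ^ 2 = |z j - w j| := by
    intro j
    rcases hz j with h | h <;> rcases hw j with h' | h' <;> simp [h, h']
  rw [← Equiv.sum_comp (finProdFinEquiv.trans (finCongr (mul_comm η 2))),
    Fintype.sum_prod_type, Finset.mul_sum]
  refine Finset.sum_congr rfl fun j _ => ?_
  have h : ∀ b : Fin 2, (altPair z ((finProdFinEquiv.trans (finCongr (mul_comm η 2))) (j, b))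
      - altPair w ((finProdFinEquiv.trans (finCongr (mul_comm η 2))) (j, b))) ^ 2
      = |z j - w j| := by
    intro b
    rw [← key j]
    have hv : ((finProdFinEquiv.trans (finCongr (mul_comm η 2))) (j, b)).val
        = b.val + 2 * j.val := rfl
    have hj : ∀ p, (⟨((finProdFinEquiv.trans (finCongr (mul_comm η 2))) (j, b)).val / 2, p⟩
        : Fin η) = j := by
      intro p
      apply Fin.ext
      have := b.isLt
      simp only [hv]
      omega
    unfold altPair
    simp only [hj]
    split_ifs <;> ring
  rw [Fin.sum_univ_two, h, h]
  ring
end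

section
/- Let x_1, …, x_{2k} ∈ X_m be pairwise distinct ranking vectors partitioned into k clusters S_1, …, S_k, and let y_1, …, y_k ∈ X_m be arbitrary ranking-vector centroids for these clusters. Then the clustering objective is at least 2k: Σ_{ℓ=1}^k Σ_{x ∈ S_ℓ} ‖x − y_ℓ‖² ≥ 2k. -/
theorem ranking_dist {m : ℕ} (x y : Fin m → ℝ) (hx : IsRankingVector x)
    (hy : IsRankingVector y) (h : x ≠ y) : 2 ≤ ∑ j, (x j - y j) ^ 2 := by
  obtain ⟨σ, hσ⟩ := hx
  obtain ⟨τ, hτ⟩ := hy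
  have key : ∀ j, σ j ≠ τ j → 1 ≤ (x j - y j) ^ 2 := by
    intro j hj
    rw [hσ, hτ]
    have h1 : ((σ j : ℕ) : ℤ) - ((τ j : ℕ) : ℤ) ≠ 0 := by
      intro h0
      apply hj
      apply Fin.ext
      omega
    have h2 : 1 ≤ (((σ j : ℕ) : ℤ) - ((τ j : ℕ) : ℤ)) ^ 2 := by
      have := sq_pos_of_ne_zero h1
      omega
    have h3 : (1 : ℝ) ≤ (((σ j : ℕ) : ℝ) - ((τ j : ℕ) : ℝ)) ^ 2 := by exact_mod_cast h2
    calc (1 : ℝ) ≤ _ := h3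
      _ = _ := by ring
  have hex : ∃ j, σ j ≠ τ j := by
    by_contra! hc
    apply h
    funext j
    rw [hσ, hτ, hc]
  obtain ⟨j, hj⟩ := hex
  have hs : σ (σ.symm (τ j)) = τ j := by simp
  have hne : j ≠ σ.symm (τ j) := by
    intro h0
    apply hj
    rw [← h0] at hs
    exact hs
  have hj' : σ (σ.symm (τ j)) ≠ τ (σ.symm (τ j)) := by
    rw [hs]
    intro h0
    exact hne (τ.injective h0)
  calc (2 : ℝ) ≤ ∑ i ∈ {j, σ.symm (τ j)}, (x i - y i) ^ 2 := by
        rw [Finset.sum_pair hne]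
        linarith [key _ hj, key _ hj']
    _ ≤ _ := Finset.sum_le_sum_of_subset_of_nonneg (Finset.subset_univ _)
        (fun _ _ _ => sq_nonneg _)

/-- For `2k` pairwise distinct ranking vectors partitioned into `k` clusters with
ranking-vector centroids, the clustering objective is at least `2k`. -/
theorem stmt14 (m k : ℕ) (x : Fin (2 * k) → Fin m → ℝ)
    (hx : ∀ i, IsRankingVector (x i)) (hdist : Function.Injective x)
    (c : Fin (2 * k) → Fin k)
    (y : Fin k → Fin m → ℝ) (hy : ∀ ℓ, IsRankingVector (y ℓ)) :
    2 * (k : ℝ) ≤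
      ∑ ℓ, ∑ i ∈ Finset.univ.filter (fun i => c i = ℓ), ∑ j, (x i j - y ℓ j) ^ 2 := by
  classical
  have hcl : ∀ ℓ : Fin k, 2 * ((Finset.univ.filter (fun i => c i = ℓ)).card : ℝ) - 2 ≤
      ∑ i ∈ Finset.univ.filter (fun i => c i = ℓ), ∑ j, (x i j - y ℓ j) ^ 2 := by
    intro ℓ
    set S := Finset.univ.filter (fun i => c i = ℓ)
    have h1 : ∀ i ∈ S, (2 : ℝ) - 2 * (if x i = y ℓ then 1 else 0) ≤
        ∑ j, (x i j - y ℓ j) ^ 2 := by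
      intro i _
      split_ifs with h
      · have : 0 ≤ ∑ j, (x i j - y ℓ j) ^ 2 := Finset.sum_nonneg (fun _ _ => sq_nonneg _)
        linarith
      · have := ranking_dist _ _ (hx i) (hy ℓ) h
        linarith
    have h2 := Finset.sum_le_sum h1
    rw [Finset.sum_sub_distrib, ← Finset.mul_sum, Finset.sum_boole, Finset.sum_const,
      nsmul_eq_mul] at h2
    have h3 : (S.filter (fun i => x i = y ℓ)).card ≤ 1 := by
      rw [Finset.card_le_one]
      intro a ha b hb
      exact hdist ((Finset.mem_filter.1 ha).2.trans (Finset.mem_filter.1 hb).2.symm)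
    have h4 : ((S.filter (fun i => x i = y ℓ)).card : ℝ) ≤ 1 := by exact_mod_cast h3
    linarith
  have hsum := Finset.sum_le_sum (fun ℓ (_ : ℓ ∈ Finset.univ) => hcl ℓ)
  have hcard : ∑ ℓ : Fin k, (Finset.univ.filter (fun i => c i = ℓ)).card = 2 * k := by
    rw [← Finset.card_eq_sum_card_fiberwise (fun i _ => Finset.mem_coe.2 (Finset.mem_univ (c i)))]
    simp
  have hcard' : ∑ ℓ : Fin k, ((Finset.univ.filter (fun i => c i = ℓ)).card : ℝ) = 2 * k := by
    exact_mod_cast hcard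
  rw [Finset.sum_sub_distrib, ← Finset.mul_sum, hcard', Finset.sum_const, nsmul_eq_mul,
    Finset.card_univ, Fintype.card_fin] at hsum
  linarith
end

section
/- Let y ∈ X_m be a ranking vector, let 1 ≤ p ≤ m, and let f = (f_1, …, f_p) be a tuple of p distinct values from {1, …, m}. Let R = {1, …, m} \ {f_1, …, f_p}, let r̲_1 < ⋯ < r̲_{m−p} be the elements of R in ascending order and r̄_1 > ⋯ > r̄_{m−p} the same elements in descending order, and let a_1 < ⋯ < a_{m−p} be the values {y_{p+1}, …, y_m} (the last m−p coordinates of y) sorted in ascending order. Then for every ranking vector x ∈ X_m whose first p coordinates equal f (x_j = f_j for j = 1, …, p), Σ_{j=1}^p (y_j − f_j)² + Σ_{i=1}^{m−p} (a_i − r̲_i)² ≤ ‖x − y‖² ≤ Σ_{j=1}^p (y_j − f_j)² + Σ_{i=1}^{m−p} (a_i − r̄_i)². -/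
theorem aux_perm {n : ℕ} (u v : Fin n → ℝ) (hu : Function.Injective u)
    (h : ∀ i, u i ∈ Set.range v) : ∃ σ : Equiv.Perm (Fin n), ∀ i, u i = v (σ i) := by
  choose g hg using h
  have gi : Function.Injective g := fun i j hij => hu (by rw [← hg i, ← hg j, hij])
  exact ⟨Equiv.ofBijective g (Finite.injective_iff_bijective.mp gi), fun i => (hg i).symm⟩

theorem aux_sq {n : ℕ} (a r : Fin n → ℝ) (σ : Equiv.Perm (Fin n)) :
    ∑ i, (a i - r (σ i)) ^ 2 =
      ∑ i, (a i) ^ 2 + ∑ i, (r i) ^ 2 - 2 * ∑ i, a i * r (σ i) := by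
  rw [← Equiv.sum_comp σ (fun i => (r i) ^ 2), Finset.mul_sum, ← Finset.sum_add_distrib,
    ← Finset.sum_sub_distrib]
  exact Finset.sum_congr rfl fun i _ => by ring

theorem aux_pair {n : ℕ} (a r u w : Fin n → ℝ) (hu : Function.Injective u)
    (hw : Function.Injective w) (hur : ∀ i, u i ∈ Set.range r) (hwa : ∀ i, w i ∈ Set.range a) :
    ∃ σ : Equiv.Perm (Fin n), ∑ i, (u i - w i) ^ 2 = ∑ i, (a i - r (σ i)) ^ 2 := by
  obtain ⟨σ, hσ⟩ := aux_perm u r hu hur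
  obtain ⟨τ, hτ⟩ := aux_perm w a hw hwa
  refine ⟨τ.symm.trans σ, ?_⟩
  rw [← Equiv.sum_comp τ (fun i => (a i - r ((τ.symm.trans σ) i)) ^ 2)]
  refine Finset.sum_congr rfl fun i _ => ?_
  rw [hσ, hτ]
  simp only [Equiv.trans_apply, Equiv.symm_apply_apply]
  ring

theorem aux_inj {m : ℕ} {x : Fin m → ℝ} (hx : IsRankingVector x) : Function.Injective x := by
  obtain ⟨σ, hσ⟩ := hx
  intro i j h
  rw [hσ, hσ] at h
  have h2 : ((σ i : ℕ) : ℝ) = ((σ j : ℕ) : ℝ) := by linarith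
  exact σ.injective (Fin.ext (by exact_mod_cast h2))

theorem aux_main (m p n : ℕ) (hm : m = p + n) (hpm : p ≤ m)
    (y : Fin m → ℝ) (hy : IsRankingVector y)
    (f : Fin p → ℝ)
    (rlo rhi : Fin n → ℝ)
    (hrlo : StrictMono rlo) (hrhi : StrictAnti rhi)
    (hrloR : Set.range rlo =
      {v : ℝ | (∃ t : Fin m, v = ((t : ℕ) : ℝ) + 1) ∧ ∀ j, v ≠ f j})
    (hrhiR : Set.range rhi =
      {v : ℝ | (∃ t : Fin m, v = ((t : ℕ) : ℝ) + 1) ∧ ∀ j, v ≠ f j})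
    (a : Fin n → ℝ) (ha : StrictMono a)
    (haR : Set.range a = {v : ℝ | ∃ t : Fin m, p ≤ (t : ℕ) ∧ v = y t})
    (x : Fin m → ℝ) (hx : IsRankingVector x)
    (hxf : ∀ j : Fin p, x (Fin.castLE hpm j) = f j) :
    (∑ j : Fin p, (y (Fin.castLE hpm j) - f j) ^ 2 + ∑ i, (a i - rlo i) ^ 2
        ≤ ∑ t, (x t - y t) ^ 2) ∧
      ∑ t, (x t - y t) ^ 2
        ≤ ∑ j : Fin p, (y (Fin.castLE hpm j) - f j) ^ 2 + ∑ i, (a i - rhi i) ^ 2 := by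
  subst hm
  have hxi := aux_inj hx
  have hyi := aux_inj hy
  have hni : Function.Injective (Fin.natAdd p : Fin n → Fin (p + n)) :=
    fun i j h => by simpa using h
  have hR : ∀ i : Fin n, x (Fin.natAdd p i) ∈
      {v : ℝ | (∃ t : Fin (p + n), v = ((t : ℕ) : ℝ) + 1) ∧ ∀ j, v ≠ f j} := by
    intro i
    refine ⟨?_, ?_⟩
    · obtain ⟨σ, hσ⟩ := hx
      exact ⟨_, hσ _⟩
    · intro j h
      rw [← hxf j] at h
      have h3 := congrArg Fin.val (hxi h)
      simp at h3
      omega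
  have hA : ∀ i : Fin n, y (Fin.natAdd p i) ∈ Set.range a := by
    intro i
    rw [haR]
    exact ⟨_, by simp, rfl⟩
  have hs : ∑ t, (x t - y t) ^ 2 = ∑ j : Fin p, (y (Fin.castLE hpm j) - f j) ^ 2
      + ∑ i : Fin n, (x (Fin.natAdd p i) - y (Fin.natAdd p i)) ^ 2 := by
    rw [Fin.sum_univ_add]
    congr 1
    refine Finset.sum_congr rfl fun j _ => ?_
    rw [← hxf j]
    change (x (Fin.castLE hpm j) - y (Fin.castLE hpm j)) ^ 2 = _
    ring
  rw [hs]
  constructor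
  · obtain ⟨σ, h⟩ := aux_pair a rlo (fun i => x (Fin.natAdd p i)) (fun i => y (Fin.natAdd p i))
      (hxi.comp hni) (hyi.comp hni) (fun i => hrloR ▸ hR i) hA
    rw [h, aux_sq]
    have h1 := aux_sq a rlo (Equiv.refl _)
    simp only [Equiv.refl_apply] at h1
    have h2 := (ha.monotone.monovary hrlo.monotone).sum_mul_comp_perm_le_sum_mul (σ := σ)
    linarith
  · obtain ⟨σ, h⟩ := aux_pair a rhi (fun i => x (Fin.natAdd p i)) (fun i => y (Fin.natAdd p i))
      (hxi.comp hni) (hyi.comp hni) (fun i => hrhiR ▸ hR i) hA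
    rw [h, aux_sq]
    have h1 := aux_sq a rhi (Equiv.refl _)
    simp only [Equiv.refl_apply] at h1
    have h2 := (ha.monotone.antivary hrhi.antitone).sum_mul_le_sum_mul_comp_perm (σ := σ)
    linarith

/-- Lower and upper bounds on `‖x − y‖²` for any ranking vector `x` whose first `p`
coordinates are fixed to a tuple `f` of distinct values from `{1,…,m}`. Here `rlo`
(resp. `rhi`) enumerates `R = {1,…,m} \ {f₁,…,f_p}` in ascending (resp. descending)
order, and `a` enumerates the last `m − p` coordinates of `y` in ascending order. -/
theorem stmt15 (m p : ℕ) (hp1 : 1 ≤ p) (hpm : p ≤ m)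
    (y : Fin m → ℝ) (hy : IsRankingVector y)
    (f : Fin p → ℝ) (hfinj : Function.Injective f)
    (hfval : ∀ j, ∃ t : Fin m, f j = ((t : ℕ) : ℝ) + 1)
    (rlo rhi : Fin (m - p) → ℝ)
    (hrlo : StrictMono rlo) (hrhi : StrictAnti rhi)
    (hrloR : Set.range rlo =
      {v : ℝ | (∃ t : Fin m, v = ((t : ℕ) : ℝ) + 1) ∧ ∀ j, v ≠ f j})
    (hrhiR : Set.range rhi =
      {v : ℝ | (∃ t : Fin m, v = ((t : ℕ) : ℝ) + 1) ∧ ∀ j, v ≠ f j})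
    (a : Fin (m - p) → ℝ) (ha : StrictMono a)
    (haR : Set.range a = {v : ℝ | ∃ t : Fin m, p ≤ (t : ℕ) ∧ v = y t})
    (x : Fin m → ℝ) (hx : IsRankingVector x)
    (hxf : ∀ j : Fin p, x (Fin.castLE hpm j) = f j) :
    (∑ j : Fin p, (y (Fin.castLE hpm j) - f j) ^ 2 + ∑ i, (a i - rlo i) ^ 2
        ≤ ∑ t, (x t - y t) ^ 2) ∧
      ∑ t, (x t - y t) ^ 2
        ≤ ∑ j : Fin p, (y (Fin.castLE hpm j) - f j) ^ 2 + ∑ i, (a i - rhi i) ^ 2 := by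
  exact aux_main m p (m - p) (by omega) hpm y hy f rlo rhi hrlo hrhi hrloR hrhiR a ha haR x hx hxf
end
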